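/- Let n ≥ 2, 0 < σ < 1, and F(s) = ₂F₁((n-2σ)/4, (n-2σ)/4; n/2; s). Then ∫₀¹ s^{n/2 - 1} (1-s)^{-σ} ( s(1-s) F'(s)² + ((n-2σ)/4)² F(s)² ) ds = Γ(n/2)² Γ(σ) Γ(1-σ) / ( Γ((n-2σ)/4)² Γ((n+2σ)/4)² ). -/

import Mathlib

/-- The Gauss hypergeometric function, defined by its series. -/
noncomputable def hyp2F1 (a b c z : ℝ) : ℝ :=
  ∑' s : ℕ, ((ascPochhammer ℝ s).eval a * (ascPochhammer ℝ s).eval b /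
    (ascPochhammer ℝ s).eval c) * z ^ s / (Nat.factorial s : ℝ)

/-!
For `F = ₂F₁ a b c` and its flux `Φ s = s ^ c * (1 - s) ^ (a + b + 1 - c) * F' s`, the
hypergeometric equation reads
`Φ' s = s ^ (c - 1) * (1 - s) ^ (a + b - c) * (a * b * F s)`,
so the integrand is the derivative of `Φ * F` and only the limits of `Φ * F` at `0` and `1` matter.
At `0` the flux vanishes. Integrating power series termwise against beta densities gives both limits
at `1`: that of `F` is Gauss's value of `₂F₁ a b c 1`, and that of `Φ`, the integral of the right
side of the equation, is a multiple of Gauss's value of `₂F₁ a b (a + b + 1) 1`.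
-/

open Filter FormalMultilinearSeries MeasureTheory Set Topology
open Real (Gamma Gamma_add_one)
open ProbabilityTheory (beta beta_pos beta_eq_betaIntegralReal)

section PowerSeries

variable {𝕜 : Type*} [NontriviallyNormedField 𝕜]

theorem hasFPowerSeriesOnBall_deriv_ofScalars [CompleteSpace 𝕜] {f : 𝕜 → 𝕜} {u : ℕ → 𝕜} {x : 𝕜}
    {r : ENNReal} (hf : HasFPowerSeriesOnBall f (ofScalars 𝕜 u) x r) :
    HasFPowerSeriesOnBall (deriv f) (ofScalars 𝕜 fun k => (k + 1) * u (k + 1)) x r := by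
  have h := (ContinuousLinearMap.apply 𝕜 𝕜 (1 : 𝕜)).comp_hasFPowerSeriesOnBall hf.fderiv
  have hcoeff : ofScalars 𝕜 (fun k => (k + 1) * u (k + 1)) =
    (ContinuousLinearMap.apply 𝕜 𝕜 (1 : 𝕜)).compFormalMultilinearSeries
      (ofScalars 𝕜 u).derivSeries := by
    ext k
    simp [ContinuousLinearMap.compFormalMultilinearSeries_apply]
  exact hcoeff ▸ h

theorem hasSum_of_hasFPowerSeriesOnBall_ofScalars {f : 𝕜 → 𝕜} {u : ℕ → 𝕜} {r : ENNReal} {x : 𝕜}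
    (hf : HasFPowerSeriesOnBall f (ofScalars 𝕜 u) 0 r) (hx : x ∈ Metric.eball 0 r) :
    HasSum (fun k => u k * x ^ k) (f x) := by
  simpa [ofScalars_apply_eq, mul_comm] using hf.hasSum hx

theorem hasSum_mul_pow_of_hasSum_succ {u : ℕ → 𝕜} {x s : 𝕜} (h0 : u 0 = 0)
    (h : HasSum (fun k => u (k + 1) * x ^ k) s) : HasSum (fun k => u k * x ^ k) (x * s) := by
  have hshift : HasSum (fun k => u (k + 1) * x ^ (k + 1)) (x * s) := by
    simpa only [pow_succ', mul_left_comm x] using h.mul_left x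
  simpa [h0] using (hasSum_nat_add_iff (f := fun k => u k * x ^ k) 1).1 hshift

end PowerSeries

section Hypergeometric

variable {𝕂 : Type*} [RCLike 𝕂] (a b c : 𝕂)

theorem one_le_radius_ordinaryHypergeometricSeries :
    1 ≤ (ordinaryHypergeometricSeries 𝕂 a b c).radius := by
  by_cases habc : ∀ k : ℕ, (k : 𝕂) ≠ -a ∧ (k : 𝕂) ≠ -b ∧ (k : 𝕂) ≠ -c
  · exact (ordinaryHypergeometricSeries_radius_eq_one 𝕂 a b c habc).ge
  · push Not at habc
    obtain ⟨k, hk⟩ := habc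
    have hk' : (k : 𝕂) = -a ∨ (k : 𝕂) = -b ∨ (k : 𝕂) = -c := by tauto
    rw [radius_eq_top_of_forall_image_add_eq_zero _ (1 + k) fun n =>
      ordinaryHypergeometricSeries_eq_zero_of_neg_nat a b c hk' (by lia)]
    exact le_top

theorem hasFPowerSeriesOnBall_ordinaryHypergeometric :
    HasFPowerSeriesOnBall (₂F₁ a b c : 𝕂 → 𝕂)
      (ofScalars 𝕂 (ordinaryHypergeometricCoefficient a b c)) 0 1 :=
  have hradius := one_le_radius_ordinaryHypergeometricSeries a b c
  ((ordinaryHypergeometricSeries 𝕂 a b c).hasFPowerSeriesOnBall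
    (zero_lt_one.trans_le hradius)).mono zero_lt_one hradius

theorem ordinaryHypergeometricCoefficient_recurrence {k : ℕ} (hc : c + k ≠ 0) :
    (k + 1) * (c + k) * ordinaryHypergeometricCoefficient a b c (k + 1) =
      (a + k) * (b + k) * ordinaryHypergeometricCoefficient a b c k := by
  simp only [ordinaryHypergeometricCoefficient, ascPochhammer_succ_eval, Nat.factorial_succ,
    Nat.cast_mul, Nat.cast_succ, mul_inv_rev]
  have : (k + 1 : 𝕂) ≠ 0 := Nat.cast_add_one_ne_zero k
  field_simp

variable {a b c} {x : 𝕂}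

theorem mem_eball_zero_one_of_norm_lt_one (hx : ‖x‖ < 1) : x ∈ Metric.eball (0 : 𝕂) 1 := by
  simpa [← ENNReal.ofReal_one, Metric.eball_ofReal] using hx

theorem analyticAt_ordinaryHypergeometric (hx : ‖x‖ < 1) : AnalyticAt 𝕂 (₂F₁ a b c) x :=
  (hasFPowerSeriesOnBall_ordinaryHypergeometric a b c).analyticAt_of_mem
    (mem_eball_zero_one_of_norm_lt_one hx)

theorem hasSum_ordinaryHypergeometric (hx : ‖x‖ < 1) :
    HasSum (fun k => ordinaryHypergeometricCoefficient a b c k * x ^ k) (₂F₁ a b c x) :=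
  hasSum_of_hasFPowerSeriesOnBall_ofScalars (hasFPowerSeriesOnBall_ordinaryHypergeometric a b c)
    (mem_eball_zero_one_of_norm_lt_one hx)

theorem ordinaryHypergeometric_ode (hc : ∀ k : ℕ, c + k ≠ 0) (hx : ‖x‖ < 1) :
    x * (1 - x) * deriv (deriv (₂F₁ a b c)) x + (c - (a + b + 1) * x) * deriv (₂F₁ a b c) x =
      a * b * ₂F₁ a b c x := by
  set h := ordinaryHypergeometricCoefficient a b c
  have hx' := mem_eball_zero_one_of_norm_lt_one hx
  have hasF := hasFPowerSeriesOnBall_ordinaryHypergeometric a b c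
  have hasF' := hasFPowerSeriesOnBall_deriv_ofScalars hasF
  have sum_F : HasSum (fun k => h k * x ^ k) (₂F₁ a b c x) := hasSum_ordinaryHypergeometric hx
  have sum_F' := hasSum_of_hasFPowerSeriesOnBall_ofScalars hasF' hx'
  have sum_F'' := hasSum_of_hasFPowerSeriesOnBall_ofScalars
    (hasFPowerSeriesOnBall_deriv_ofScalars hasF') hx'
  have sum_xF' := hasSum_mul_pow_of_hasSum_succ (u := fun k => k * h k) (by simp)
    (by simpa only [Nat.cast_succ] using sum_F')
  have sum_xF'' := hasSum_mul_pow_of_hasSum_succ (u := fun k => k * ((k + 1) * h (k + 1)))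
    (by simp) (by simpa only [Nat.cast_succ] using sum_F'')
  have sum_xxF'' := hasSum_mul_pow_of_hasSum_succ (u := fun k => (k - 1) * (k * h k)) (by simp)
    (by simpa only [Nat.cast_succ, add_sub_cancel_right] using sum_xF'')
  have sum_ode := ((sum_xF''.add (sum_F'.mul_left c)).sub
    (sum_xxF''.add (sum_xF'.mul_left (a + b + 1)))).unique ((sum_F.mul_left (a * b)).congr_fun ?_)
  · linear_combination sum_ode
  · intro k
    linear_combination x ^ k * ordinaryHypergeometricCoefficient_recurrence a b c (hc k)

end Hypergeometric

section UnitInterval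

variable {s : ℝ}

theorem norm_lt_one_of_mem_Ioo (hs : s ∈ Ioo (0 : ℝ) 1) : ‖s‖ < 1 := by
  rw [Real.norm_of_nonneg hs.1.le]
  exact hs.2

theorem rpow_mul_one_sub_rpow_eq_mul (hs : s ∈ Ioo (0 : ℝ) 1) (α β : ℝ) :
    s ^ α * (1 - s) ^ β = s ^ (α - 1) * (1 - s) ^ (β - 1) * (s * (1 - s)) := by
  have hs0 := hs.1.ne'
  have hs1 := (sub_pos.2 hs.2).ne'
  rw [Real.rpow_sub_one hs0, Real.rpow_sub_one hs1]
  field_simp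

theorem hasDerivAt_rpow_mul_one_sub_rpow (hs : s ∈ Ioo (0 : ℝ) 1) (α β : ℝ) :
    HasDerivAt (fun s : ℝ => s ^ α * (1 - s) ^ β)
      (s ^ (α - 1) * (1 - s) ^ (β - 1) * (α - (α + β) * s)) s := by
  have hs0 := hs.1.ne'
  have hs1 := (sub_pos.2 hs.2).ne'
  have hleft : HasDerivAt (fun s : ℝ => s ^ α) (α * s ^ (α - 1)) s :=
    Real.hasDerivAt_rpow_const (Or.inl hs0)
  have hright : HasDerivAt (fun s : ℝ => (1 - s) ^ β) (-1 * β * (1 - s) ^ (β - 1)) s :=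
    ((hasDerivAt_id s).const_sub 1).rpow_const (Or.inl hs1)
  refine (hleft.mul hright).congr_deriv ?_
  rw [Real.rpow_sub_one hs0, Real.rpow_sub_one hs1]
  field_simp
  ring

end UnitInterval

section Beta

theorem eqOn_cpow_mul_one_sub_cpow_ofReal_rpow (α β : ℝ) :
    EqOn (fun t : ℝ => (t : ℂ) ^ ((α : ℂ) - 1) * (1 - (t : ℂ)) ^ ((β : ℂ) - 1))
      (fun t => ((t ^ (α - 1) * (1 - t) ^ (β - 1) : ℝ) : ℂ)) (Ioo 0 1) := fun t ht => by
  simp [Complex.ofReal_cpow ht.1.le, Complex.ofReal_cpow (sub_nonneg.2 ht.2.le)]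

theorem integrableOn_rpow_mul_one_sub_rpow {α β : ℝ} (hα : 0 < α) (hβ : 0 < β) :
    IntegrableOn (fun t : ℝ => t ^ (α - 1) * (1 - t) ^ (β - 1)) (Ioo 0 1) := by
  have hconv := Complex.betaIntegral_convergent (u := α) (v := β) (by simpa) (by simpa)
  rw [intervalIntegrable_iff_integrableOn_Ioo_of_le zero_le_one,
    integrableOn_congr_fun (eqOn_cpow_mul_one_sub_cpow_ofReal_rpow α β) measurableSet_Ioo] at hconv
  simpa using! hconv.re

theorem integral_rpow_mul_one_sub_rpow {α β : ℝ} (hα : 0 < α) (hβ : 0 < β) :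
    ∫ t in Ioo (0 : ℝ) 1, t ^ (α - 1) * (1 - t) ^ (β - 1) = beta α β := by
  rw [beta_eq_betaIntegralReal α β hα hβ, Complex.betaIntegral,
    intervalIntegral.integral_of_le zero_le_one, integral_Ioc_eq_integral_Ioo,
    setIntegral_congr_fun measurableSet_Ioo (eqOn_cpow_mul_one_sub_cpow_ofReal_rpow α β),
    integral_complex_ofReal, Complex.ofReal_re]

theorem Gamma_add_nat_eq_ascPochhammer_mul {x : ℝ} (hx : ∀ k : ℕ, x + k ≠ 0) (n : ℕ) :
    Gamma (x + n) = (ascPochhammer ℝ n).eval x * Gamma x := by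
  induction n with
  | zero => simp
  | succ n ih =>
    rw [Nat.cast_succ, ← add_assoc, Gamma_add_one (hx n), ih, ascPochhammer_succ_eval]
    ring

theorem beta_add_nat_left {α β : ℝ} (hα : 0 < α) (hβ : 0 < β) (n : ℕ) :
    beta (α + n) β =
      (ascPochhammer ℝ n).eval α / (ascPochhammer ℝ n).eval (α + β) * beta α β := by
  rw [beta, beta, add_right_comm, Gamma_add_nat_eq_ascPochhammer_mul (fun k => by positivity),
    Gamma_add_nat_eq_ascPochhammer_mul (fun k => by positivity)]
  ring

theorem hasSum_mul_beta {α β : ℝ} {u : ℕ → ℝ} {f : ℝ → ℝ} (hα : 0 < α) (hβ : 0 < β)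
    (hu : ∀ k, 0 ≤ u k) (hf : ∀ t ∈ Ioo (0 : ℝ) 1, HasSum (fun k => u k * t ^ k) (f t))
    (hint : IntegrableOn (fun t => t ^ (α - 1) * (1 - t) ^ (β - 1) * f t) (Ioo 0 1)) :
    HasSum (fun k => u k * beta (α + k) β)
      (∫ t in Ioo (0 : ℝ) 1, t ^ (α - 1) * (1 - t) ^ (β - 1) * f t) := by
  let term (k : ℕ) (t : ℝ) : ℝ := u k * (t ^ (α + k - 1) * (1 - t) ^ (β - 1))
  have term_nonneg : ∀ t ∈ Ioo (0 : ℝ) 1, ∀ k, 0 ≤ term k t := fun t ht k =>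
    mul_nonneg (hu k) (mul_nonneg (Real.rpow_nonneg ht.1.le _)
      (Real.rpow_nonneg (sub_nonneg.2 ht.2.le) _))
  have term_integrable (k : ℕ) : IntegrableOn (term k) (Ioo 0 1) :=
    (integrableOn_rpow_mul_one_sub_rpow (by positivity) hβ).const_mul (u k)
  have hasSum_term : ∀ t ∈ Ioo (0 : ℝ) 1,
      HasSum (term · t) (t ^ (α - 1) * (1 - t) ^ (β - 1) * f t) := fun t ht => by
    refine ((hf t ht).mul_left (t ^ (α - 1) * (1 - t) ^ (β - 1))).congr_fun fun k => ?_
    simp only [term]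
    rw [add_sub_right_comm, Real.rpow_add_natCast ht.1.ne']
    ring
  have integral_term (k : ℕ) : ∫ t in Ioo (0 : ℝ) 1, term k t = u k * beta (α + k) β := by
    rw [integral_const_mul, integral_rpow_mul_one_sub_rpow (by positivity) hβ]
  have on_Ioo {p : ℝ → Prop} (h : ∀ t ∈ Ioo (0 : ℝ) 1, p t) :
      ∀ᵐ t ∂volume.restrict (Ioo (0 : ℝ) 1), p t := ae_restrict_of_forall_mem measurableSet_Ioo h
  simp only [← integral_term]
  refine hasSum_integral_of_dominated_convergence term
    (fun k => (term_integrable k).aestronglyMeasurable) (fun k => on_Ioo fun t ht => ?_)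
    (on_Ioo fun t ht => (hasSum_term t ht).summable) ?_ (on_Ioo hasSum_term)
  · exact (Real.norm_of_nonneg (term_nonneg t ht k)).le
  · exact hint.congr (on_Ioo fun t ht => (hasSum_term t ht).tsum_eq.symm)

end Beta

section Gauss

variable {a b c : ℝ}

theorem hasSum_one_sub_rpow_neg (a : ℝ) {x : ℝ} (hx : ‖x‖ < 1) :
    HasSum (fun k : ℕ => (ascPochhammer ℝ k).eval a / (k.factorial : ℝ) * x ^ k)
      ((1 - x) ^ (-a)) := by
  have hchoose (k : ℕ) :
      (ascPochhammer ℝ k).eval a / (k.factorial : ℝ) = Ring.choose (a + k - 1) k := by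
    rw [← Ring.multichoose_eq, ← Polynomial.ascPochhammer_smeval_eq_eval,
      ← Ring.factorial_nsmul_multichoose_eq_ascPochhammer, nsmul_eq_mul]
    field_simp
  rw [Real.rpow_neg (by linarith [Real.le_norm_self x]), ← one_div]
  simpa only [hchoose] using hasSum_of_hasFPowerSeriesOnBall_ofScalars
    (Real.one_div_one_sub_rpow_hasFPowerSeriesOnBall_zero a) (mem_eball_zero_one_of_norm_lt_one hx)

theorem ordinaryHypergeometricCoefficient_nonneg (ha : 0 < a) (hb : 0 < b) (hc : 0 < c) (k : ℕ) :
    0 ≤ ordinaryHypergeometricCoefficient a b c k := by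
  have := ascPochhammer_pos k a ha
  have := ascPochhammer_pos k b hb
  have := ascPochhammer_pos k c hc
  positivity

theorem hasSum_ordinaryHypergeometricCoefficient (ha : 0 < a) (hb : 0 < b) (habc : a + b < c) :
    HasSum (ordinaryHypergeometricCoefficient a b c)
      (Gamma c * Gamma (c - a - b) / (Gamma (c - a) * Gamma (c - b))) := by
  have hcb : 0 < c - b := by linarith
  have hcab : 0 < c - a - b := by linarith
  have hkernel : EqOn (fun t : ℝ => t ^ (b - 1) * (1 - t) ^ (c - b - 1) * (1 - t) ^ (-a))
      (fun t => t ^ (b - 1) * (1 - t) ^ (c - a - b - 1)) (Ioo 0 1) := fun t ht => by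
    simp only [mul_assoc, ← Real.rpow_add (sub_pos.2 ht.2)]
    ring_nf
  have hsum := hasSum_mul_beta hb hcb
    (fun k => div_nonneg (ascPochhammer_pos k a ha).le (Nat.cast_nonneg _))
    (fun t ht => hasSum_one_sub_rpow_neg a (norm_lt_one_of_mem_Ioo ht))
    ((integrableOn_congr_fun hkernel measurableSet_Ioo).2
      (integrableOn_rpow_mul_one_sub_rpow hb hcab))
  rw [setIntegral_congr_fun measurableSet_Ioo hkernel, integral_rpow_mul_one_sub_rpow hb hcab]
    at hsum
  have hcoeff (k : ℕ) : ordinaryHypergeometricCoefficient a b c k =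
      (ascPochhammer ℝ k).eval a / (k.factorial : ℝ) * beta (b + k) (c - b) / beta b (c - b) := by
    rw [beta_add_nat_left hb hcb, add_sub_cancel, ← mul_assoc,
      mul_div_cancel_right₀ _ (beta_pos hb hcb).ne']
    ring
  have hvalue : Gamma c * Gamma (c - a - b) / (Gamma (c - a) * Gamma (c - b)) =
      beta b (c - a - b) / beta b (c - b) := by
    have := Real.Gamma_pos_of_pos hb
    have := Real.Gamma_pos_of_pos (show 0 < c by linarith)
    rw [beta, beta, add_sub_cancel, add_sub_cancel]
    field_simp
  rw [hvalue]
  exact (hsum.div_const (beta b (c - b))).congr_fun hcoeff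

theorem tendsto_ordinaryHypergeometric_nhdsLT_one (ha : 0 < a) (hb : 0 < b) (habc : a + b < c) :
    Tendsto (₂F₁ a b c) (𝓝[<] (1 : ℝ))
      (𝓝 (Gamma c * Gamma (c - a - b) / (Gamma (c - a) * Gamma (c - b)))) := by
  have h := Real.tendsto_tsum_powerSeries_nhdsWithin_lt
    (hasSum_ordinaryHypergeometricCoefficient ha hb habc).tendsto_sum_nat
  simpa only [ordinaryHypergeometric_eq_tsum, smul_eq_mul] using h

end Gauss

section EndpointLimits

variable {a b l : ℝ} {f f' : ℝ → ℝ}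

theorem tendsto_nhdsLT_of_hasDerivAt_of_integrableOn (hab : a < b)
    (hderiv : ∀ x ∈ Ioo a b, HasDerivAt f (f' x) x) (hint : IntegrableOn f' (Ioo a b))
    (ha : Tendsto f (𝓝[>] a) (𝓝 l)) :
    Tendsto f (𝓝[<] b) (𝓝 (l + ∫ x in Ioo a b, f' x)) := by
  have hint' : IntervalIntegrable f' volume a b :=
    (intervalIntegrable_iff_integrableOn_Ioo_of_le hab.le).2 hint
  have hprimitive : ∀ x ∈ Ioo a b, l + ∫ t in a..x, f' t = f x := fun x hx => by
    rw [intervalIntegral.integral_eq_sub_of_hasDerivAt_of_tendsto hx.1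
      (fun t ht => hderiv t ⟨ht.1, ht.2.trans hx.2⟩)
      (hint'.mono_set (uIcc_subset_uIcc_left (Icc_subset_uIcc ⟨hx.1.le, hx.2.le⟩))) ha
      (hderiv x hx).continuousAt.continuousWithinAt, add_sub_cancel]
  have hcont := (intervalIntegral.continuousOn_primitive_interval' hint' left_mem_uIcc b
    right_mem_uIcc).mono_left (nhdsWithin_mono b (Ioo_subset_Icc_self.trans Icc_subset_uIcc))
  rw [nhdsWithin_Ioo_eq_nhdsLT hab] at hcont
  rw [← integral_Ioc_eq_integral_Ioo, ← intervalIntegral.integral_of_le hab.le]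
  exact (hcont.const_add l).congr' (eventually_of_mem (Ioo_mem_nhdsLT hab) hprimitive)

theorem integral_Ioo_eq_sub_of_hasDerivAt_of_nonneg {m : ℝ} (hab : a < b)
    (hderiv : ∀ x ∈ Ioo a b, HasDerivAt f (f' x) x) (hnonneg : ∀ x ∈ Ioo a b, 0 ≤ f' x)
    (ha : Tendsto f (𝓝[>] a) (𝓝 l)) (hb : Tendsto f (𝓝[<] b) (𝓝 m)) :
    ∫ x in Ioo a b, f' x = m - l := by
  have hcont : ContinuousOn f (Ioo a b) := fun x hx =>
    (hderiv x hx).continuousAt.continuousWithinAt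
  have hint : IntegrableOn f' (Ioc a b) := by
    refine intervalIntegral.integrableOn_deriv_of_nonneg
      (continuousOn_Icc_extendFrom_Ioo hcont ha hb) (fun x hx => ?_) hnonneg
    exact (hderiv x hx).congr_of_eventuallyEq <|
      eventually_of_mem (Ioo_mem_nhds hx.1 hx.2) (extendFrom_extends hcont)
  rw [← integral_Ioc_eq_integral_Ioo, ← intervalIntegral.integral_of_le hab.le]
  exact intervalIntegral.integral_eq_sub_of_hasDerivAt_of_tendsto hab hderiv
    ((intervalIntegrable_iff_integrableOn_Ioc_of_le hab.le).2 hint) ha hb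

end EndpointLimits

section SelfAdjoint

variable {a b c : ℝ}

/-- The flux `s ^ c * (1 - s) ^ (a + b + 1 - c) * F' s` of `F = ₂F₁ a b c`, whose derivative is the
principal part of the hypergeometric equation in self-adjoint form. -/
noncomputable def hypergeometricFlux (a b c s : ℝ) : ℝ :=
  s ^ c * (1 - s) ^ (a + b + 1 - c) * deriv (₂F₁ a b c) s

theorem hypergeometricFlux_eq {s : ℝ} (hs : s ∈ Ioo (0 : ℝ) 1) :
    hypergeometricFlux a b c s =
      s ^ (c - 1) * (1 - s) ^ (a + b - c) * (s * (1 - s) * deriv (₂F₁ a b c) s) := by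
  rw [hypergeometricFlux, rpow_mul_one_sub_rpow_eq_mul hs,
    show a + b + 1 - c - 1 = a + b - c by ring]
  ring

theorem hasDerivAt_hypergeometricFlux (hc : ∀ k : ℕ, c + k ≠ 0) {s : ℝ}
    (hs : s ∈ Ioo (0 : ℝ) 1) :
    HasDerivAt (hypergeometricFlux a b c)
      (s ^ (c - 1) * (1 - s) ^ (a + b - c) * (a * b * ₂F₁ a b c s)) s := by
  have hF' := (analyticAt_ordinaryHypergeometric (a := a) (b := b) (c := c)
    (norm_lt_one_of_mem_Ioo hs)).deriv.differentiableAt.hasDerivAt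
  have hode := ordinaryHypergeometric_ode (a := a) (b := b) hc (norm_lt_one_of_mem_Ioo hs)
  refine ((hasDerivAt_rpow_mul_one_sub_rpow hs c (a + b + 1 - c)).mul hF').congr_deriv ?_
  rw [rpow_mul_one_sub_rpow_eq_mul hs c (a + b + 1 - c), show a + b + 1 - c - 1 = a + b - c by ring]
  linear_combination s ^ (c - 1) * (1 - s) ^ (a + b - c) * hode

theorem hasDerivAt_hypergeometricFlux_mul_ordinaryHypergeometric (hc : ∀ k : ℕ, c + k ≠ 0)
    {s : ℝ} (hs : s ∈ Ioo (0 : ℝ) 1) :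
    HasDerivAt (fun s => hypergeometricFlux a b c s * ₂F₁ a b c s)
      (s ^ (c - 1) * (1 - s) ^ (a + b - c) *
        (s * (1 - s) * deriv (₂F₁ a b c) s ^ 2 + a * b * ₂F₁ a b c s ^ 2)) s := by
  have hF := (analyticAt_ordinaryHypergeometric (a := a) (b := b) (c := c)
    (norm_lt_one_of_mem_Ioo hs)).differentiableAt.hasDerivAt
  refine ((hasDerivAt_hypergeometricFlux hc hs).mul hF).congr_deriv ?_
  rw [hypergeometricFlux_eq hs]
  ring

theorem tendsto_hypergeometricFlux_nhdsGT_zero (hc : 0 < c) :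
    Tendsto (hypergeometricFlux a b c) (𝓝[>] 0) (𝓝 0) := by
  have hpow : ContinuousAt (fun s : ℝ => s ^ c) 0 :=
    Real.continuousAt_rpow_const _ _ (Or.inr hc.le)
  have hpow' : ContinuousAt (fun s : ℝ => (1 - s) ^ (a + b + 1 - c)) 0 :=
    ContinuousAt.rpow_const (by fun_prop) (Or.inl (by norm_num))
  have hF' : ContinuousAt (deriv (₂F₁ a b c : ℝ → ℝ)) 0 :=
    (analyticAt_ordinaryHypergeometric (by simp)).deriv.continuousAt
  simpa [Real.zero_rpow hc.ne'] using!
    ((hpow.mul hpow').mul hF').tendsto.mono_left (nhdsWithin_le_nhds (s := Ioi 0))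

theorem integrableOn_rpow_mul_one_sub_rpow_mul_ordinaryHypergeometric (ha : 0 < a) (hb : 0 < b)
    (habc : a + b < c) {α β : ℝ} (hα : 0 < α) (hβ : 0 < β) :
    IntegrableOn (fun s : ℝ => s ^ (α - 1) * (1 - s) ^ (β - 1) * ₂F₁ a b c s) (Ioo 0 1) := by
  have hc : 0 < c := by linarith
  have hcoeff := ordinaryHypergeometricCoefficient_nonneg ha hb hc
  have hgauss := hasSum_ordinaryHypergeometricCoefficient ha hb habc
  have hcont : ContinuousOn (₂F₁ a b c : ℝ → ℝ) (Ioo 0 1) := fun s hs =>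
    (analyticAt_ordinaryHypergeometric
      (norm_lt_one_of_mem_Ioo hs)).continuousAt.continuousWithinAt
  refine (integrableOn_rpow_mul_one_sub_rpow hα hβ).mul_bdd
    (c := Gamma c * Gamma (c - a - b) / (Gamma (c - a) * Gamma (c - b)))
    (hcont.aestronglyMeasurable measurableSet_Ioo)
    (ae_restrict_of_forall_mem measurableSet_Ioo fun s hs => ?_)
  have hF := hasSum_ordinaryHypergeometric (a := a) (b := b) (c := c) (norm_lt_one_of_mem_Ioo hs)
  rw [Real.norm_of_nonneg (hF.nonneg fun k => mul_nonneg (hcoeff k) (pow_nonneg hs.1.le k))]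
  exact hasSum_le (fun k => mul_le_of_le_one_right (hcoeff k) (pow_le_one₀ hs.1.le hs.2.le)) hF
    hgauss

theorem integral_rpow_mul_one_sub_rpow_mul_ordinaryHypergeometric (ha : 0 < a) (hb : 0 < b)
    (habc : a + b < c) (hcab : c < a + b + 1) :
    ∫ s in Ioo (0 : ℝ) 1, s ^ (c - 1) * (1 - s) ^ (a + b - c) * ₂F₁ a b c s =
      Gamma c * Gamma (a + b + 1 - c) / (Gamma (a + 1) * Gamma (b + 1)) := by
  have hc : 0 < c := by linarith
  have hβ : 0 < a + b + 1 - c := by linarith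
  have hsum := hasSum_mul_beta hc hβ (ordinaryHypergeometricCoefficient_nonneg ha hb hc)
    (fun s hs => hasSum_ordinaryHypergeometric (norm_lt_one_of_mem_Ioo hs))
    (integrableOn_rpow_mul_one_sub_rpow_mul_ordinaryHypergeometric ha hb habc hc hβ)
  have hterm (k : ℕ) :
      ordinaryHypergeometricCoefficient a b c k * beta (c + k) (a + b + 1 - c) =
        beta c (a + b + 1 - c) * ordinaryHypergeometricCoefficient a b (a + b + 1) k := by
    have := ascPochhammer_pos k c hc
    rw [beta_add_nat_left hc hβ, add_sub_cancel]
    field_simp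
  have hgauss := (hasSum_ordinaryHypergeometricCoefficient ha hb
    (lt_add_one (a + b))).mul_left (beta c (a + b + 1 - c))
  have hvalue := hsum.unique (hgauss.congr_fun hterm)
  have := Real.Gamma_pos_of_pos (show 0 < a + b + 1 by linarith)
  rw [show a + b + 1 - c - 1 = a + b - c by ring] at hvalue
  rw [hvalue, beta, add_sub_cancel, show a + b + 1 - a - b = 1 by ring, Real.Gamma_one,
    show a + b + 1 - a = b + 1 by ring, show a + b + 1 - b = a + 1 by ring]
  field_simp

theorem tendsto_hypergeometricFlux_nhdsLT_one (ha : 0 < a) (hb : 0 < b)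
    (habc : a + b < c) (hcab : c < a + b + 1) :
    Tendsto (hypergeometricFlux a b c) (𝓝[<] 1)
      (𝓝 (Gamma c * Gamma (a + b + 1 - c) / (Gamma a * Gamma b))) := by
  have hc : 0 < c := by linarith
  have hint := (integrableOn_rpow_mul_one_sub_rpow_mul_ordinaryHypergeometric ha hb habc hc
    (show 0 < a + b + 1 - c by linarith)).const_mul (a * b)
  have hvalue : a * b * (Gamma c * Gamma (a + b + 1 - c) / (Gamma (a + 1) * Gamma (b + 1))) =
      Gamma c * Gamma (a + b + 1 - c) / (Gamma a * Gamma b) := by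
    rw [Gamma_add_one ha.ne', Gamma_add_one hb.ne']
    field_simp
  rw [show a + b + 1 - c - 1 = a + b - c by ring] at hint
  have hlim := tendsto_nhdsLT_of_hasDerivAt_of_integrableOn (f := hypergeometricFlux a b c)
    zero_lt_one (fun s hs => (hasDerivAt_hypergeometricFlux (fun k => by positivity) hs).congr_deriv
      (mul_left_comm _ _ _)) hint (tendsto_hypergeometricFlux_nhdsGT_zero hc)
  rwa [integral_const_mul, integral_rpow_mul_one_sub_rpow_mul_ordinaryHypergeometric ha hb habc
    hcab, hvalue, zero_add] at hlim

end SelfAdjoint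

theorem hyp2F1_eq_ordinaryHypergeometric (a b c : ℝ) : hyp2F1 a b c = ₂F₁ a b c := by
  ext z
  simp only [hyp2F1, ordinaryHypergeometric_eq_tsum, smul_eq_mul]
  exact tsum_congr fun k => by ring

theorem stmt11_general {a b c : ℝ} (ha : 0 < a) (hb : 0 < b) (habc : a + b < c)
    (hcab : c < a + b + 1) :
    ∫ s in Ioo (0 : ℝ) 1, s ^ (c - 1) * (1 - s) ^ (a + b - c) *
        (s * (1 - s) * deriv (hyp2F1 a b c) s ^ 2 + a * b * hyp2F1 a b c s ^ 2) =
      Gamma c ^ 2 * Gamma (c - a - b) * Gamma (a + b + 1 - c) /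
        (Gamma a * Gamma b * (Gamma (c - a) * Gamma (c - b))) := by
  have hc : 0 < c := by linarith
  simp only [hyp2F1_eq_ordinaryHypergeometric]
  have hnonneg : ∀ s ∈ Ioo (0 : ℝ) 1, 0 ≤ s ^ (c - 1) * (1 - s) ^ (a + b - c) *
      (s * (1 - s) * deriv (₂F₁ a b c) s ^ 2 + a * b * ₂F₁ a b c s ^ 2) := fun s hs => by
    have := hs.1
    have := sub_pos.2 hs.2
    positivity
  have hF : ContinuousAt (₂F₁ a b c) (0 : ℝ) :=
    (analyticAt_ordinaryHypergeometric (by simp)).continuousAt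
  have hzero := (tendsto_hypergeometricFlux_nhdsGT_zero (a := a) (b := b) hc).mul
    (hF.tendsto.mono_left nhdsWithin_le_nhds)
  have hone := (tendsto_hypergeometricFlux_nhdsLT_one ha hb habc hcab).mul
    (tendsto_ordinaryHypergeometric_nhdsLT_one ha hb habc)
  rw [integral_Ioo_eq_sub_of_hasDerivAt_of_nonneg zero_lt_one
    (fun s hs => hasDerivAt_hypergeometricFlux_mul_ordinaryHypergeometric
      (fun k => by positivity) hs) hnonneg hzero hone]
  ring

/-- Value of the Pohozaev-type integral. -/
theorem stmt11 (n : ℕ) (hn : 2 ≤ n) (σ : ℝ) (hσ : 0 < σ) (hσ1 : σ < 1) :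
    ∫ s in Set.Ioo (0 : ℝ) 1, s ^ ((n : ℝ) / 2 - 1) * (1 - s) ^ (-σ) *
        (s * (1 - s) *
            (deriv (hyp2F1 (((n : ℝ) - 2 * σ) / 4) (((n : ℝ) - 2 * σ) / 4) ((n : ℝ) / 2)) s) ^ 2 +
          (((n : ℝ) - 2 * σ) / 4) ^ 2 *
            (hyp2F1 (((n : ℝ) - 2 * σ) / 4) (((n : ℝ) - 2 * σ) / 4) ((n : ℝ) / 2) s) ^ 2) =
      Real.Gamma ((n : ℝ) / 2) ^ 2 * Real.Gamma σ * Real.Gamma (1 - σ) /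
        (Real.Gamma (((n : ℝ) - 2 * σ) / 4) ^ 2 * Real.Gamma (((n : ℝ) + 2 * σ) / 4) ^ 2) := by
  have hn' : (2 : ℝ) ≤ n := Nat.ofNat_le_cast.2 hn
  have ha : 0 < ((n : ℝ) - 2 * σ) / 4 := by linarith
  convert stmt11_general (c := (n : ℝ) / 2) ha ha (by linarith) (by linarith) using 4 <;> ring_nf
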